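/- If θ is an angle function for α, then for all (s, v): φ_s(s,v) × φ_v(s,v) = −(sin θ(s) + v·g(s))·N(s) − v·f(s)·W(s), and ‖φ_s × φ_v‖² = v²f(s)² + (sin θ(s) + v·g(s))²; consequently, at every point where v²f(s)² + (sin θ(s) + v·g(s))² ≠ 0, the unit normal of the C-ruled surface is n(s,v) = (−(sin θ(s) + v·g(s))·N(s) − v·f(s)·W(s))/√(v²f(s)² + (sin θ(s) + v·g(s))²). -/

import Mathlib

open RealInnerProductSpace

/-- Cross product on `EuclideanSpace ℝ (Fin 3)`. -/
noncomputable def cross3 (u v : EuclideanSpace ℝ (Fin 3)) : EuclideanSpace ℝ (Fin 3) :=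
  (EuclideanSpace.equiv (Fin 3) ℝ).symm
    (crossProduct ((EuclideanSpace.equiv (Fin 3) ℝ) u) ((EuclideanSpace.equiv (Fin 3) ℝ) v))

/-- Determinant of the 3×3 matrix whose rows are the given vectors. -/
noncomputable def det3 (u v w : EuclideanSpace ℝ (Fin 3)) : ℝ :=
  Matrix.det (Matrix.of ![(EuclideanSpace.equiv (Fin 3) ℝ) u,
    (EuclideanSpace.equiv (Fin 3) ℝ) v, (EuclideanSpace.equiv (Fin 3) ℝ) w])

lemma cross3_apply_zero (u v : EuclideanSpace ℝ (Fin 3)) :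
    cross3 u v 0 = u 1 * v 2 - u 2 * v 1 := by
  simp [cross3, cross_apply]

lemma cross3_apply_one (u v : EuclideanSpace ℝ (Fin 3)) :
    cross3 u v 1 = u 2 * v 0 - u 0 * v 2 := by
  simp [cross3, cross_apply]

lemma cross3_apply_two (u v : EuclideanSpace ℝ (Fin 3)) :
    cross3 u v 2 = u 0 * v 1 - u 1 * v 0 := by
  simp [cross3, cross_apply]

lemma real_inner_fin_three (u v : EuclideanSpace ℝ (Fin 3)) :
    ⟪u, v⟫ = u 0 * v 0 + u 1 * v 1 + u 2 * v 2 := by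
  simp only [PiLp.inner_apply, Fin.sum_univ_three, RCLike.inner_apply, conj_trivial]
  ring

lemma HasDerivAt.cross3 {u v : ℝ → EuclideanSpace ℝ (Fin 3)} {u' v' : EuclideanSpace ℝ (Fin 3)}
    {s : ℝ} (hu : HasDerivAt u u' s) (hv : HasDerivAt v v' s) :
    HasDerivAt (fun t => _root_.cross3 (u t) (v t))
      (_root_.cross3 u' (v s) + _root_.cross3 (u s) v') s := by
  have coord {w : ℝ → EuclideanSpace ℝ (Fin 3)} {w' : EuclideanSpace ℝ (Fin 3)}
      (hw : HasDerivAt w w' s) (i : Fin 3) : HasDerivAt (fun t => w t i) (w' i) s :=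
    (EuclideanSpace.proj (𝕜 := ℝ) i).hasFDerivAt.comp_hasDerivAt s hw
  rw [hasDerivAt_iff_hasFDerivAt, ← hasFDerivWithinAt_univ, hasFDerivWithinAt_euclidean]
  intro i
  rw [hasFDerivWithinAt_univ, hasFDerivAt_iff_hasDerivAt]
  fin_cases i
  · change HasDerivAt (fun t => _root_.cross3 (u t) (v t) 0) _ s
    simp only [cross3_apply_zero]
    refine (((coord hu 1).mul (coord hv 2)).sub ((coord hu 2).mul (coord hv 1))).congr_deriv ?_
    simp [cross3_apply_zero]
    ring
  · change HasDerivAt (fun t => _root_.cross3 (u t) (v t) 1) _ s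
    simp only [cross3_apply_one]
    refine (((coord hu 2).mul (coord hv 0)).sub ((coord hu 0).mul (coord hv 2))).congr_deriv ?_
    simp [cross3_apply_one]
    ring
  · change HasDerivAt (fun t => _root_.cross3 (u t) (v t) 2) _ s
    simp only [cross3_apply_two]
    refine (((coord hu 0).mul (coord hv 1)).sub ((coord hu 1).mul (coord hv 0))).congr_deriv ?_
    simp [cross3_apply_two]
    ring

lemma cross3_cross3 (u v w : EuclideanSpace ℝ (Fin 3)) :
    cross3 u (cross3 v w) = ⟪u, w⟫ • v - ⟪u, v⟫ • w := by
  ext i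
  fin_cases i <;>
    simp [cross3_apply_zero, cross3_apply_one, cross3_apply_two, real_inner_fin_three] <;> ring

lemma cross3_anticomm (u v : EuclideanSpace ℝ (Fin 3)) : cross3 u v = -cross3 v u := by
  ext i
  fin_cases i <;> simp [cross3_apply_zero, cross3_apply_one, cross3_apply_two] <;> ring

lemma cross3_self (u : EuclideanSpace ℝ (Fin 3)) : cross3 u u = 0 := by
  simp [cross3]

lemma cross3_add_left (u v w : EuclideanSpace ℝ (Fin 3)) :
    cross3 (u + v) w = cross3 u w + cross3 v w := by
  simp [cross3]

lemma cross3_add_right (u v w : EuclideanSpace ℝ (Fin 3)) :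
    cross3 u (v + w) = cross3 u v + cross3 u w := by
  simp [cross3]

lemma cross3_smul_left (c : ℝ) (u v : EuclideanSpace ℝ (Fin 3)) :
    cross3 (c • u) v = c • cross3 u v := by
  simp [cross3]

lemma cross3_smul_right (c : ℝ) (u v : EuclideanSpace ℝ (Fin 3)) :
    cross3 u (c • v) = c • cross3 u v := by
  simp [cross3]

lemma inner_self_cross3 (u v : EuclideanSpace ℝ (Fin 3)) : ⟪u, cross3 u v⟫ = 0 := by
  simp only [real_inner_fin_three, cross3_apply_zero, cross3_apply_one, cross3_apply_two]
  ring

lemma inner_cross3_self (u v : EuclideanSpace ℝ (Fin 3)) : ⟪v, cross3 u v⟫ = 0 := by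
  simp only [real_inner_fin_three, cross3_apply_zero, cross3_apply_one, cross3_apply_two]
  ring

lemma inner_cross3_cross3 (u v : EuclideanSpace ℝ (Fin 3)) :
    ⟪cross3 u v, cross3 u v⟫ = ⟪u, u⟫ * ⟪v, v⟫ - ⟪u, v⟫ ^ 2 := by
  simp only [real_inner_fin_three, cross3_apply_zero, cross3_apply_one, cross3_apply_two]
  ring

/-- If `T, N` are orthonormal, then crossing with `T` acts as the quarter turn on `N, T × N`. -/
lemma cross3_eq_of_orthonormal {T N : EuclideanSpace ℝ (Fin 3)} (hNN : ⟪N, N⟫ = 1)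
    (hTN : ⟪T, N⟫ = 0) (X : EuclideanSpace ℝ (Fin 3)) :
    cross3 T X = ⟪X, N⟫ • cross3 T N - ⟪X, cross3 T N⟫ • N := by
  have hT : T = cross3 N (cross3 T N) := by
    rw [cross3_cross3, hNN, real_inner_comm, hTN]; simp
  conv_lhs => rw [hT, cross3_anticomm, cross3_cross3]
  abel

lemma inner_deriv_eq_zero_of_norm_eq_one {u : ℝ → EuclideanSpace ℝ (Fin 3)}
    (hu : Differentiable ℝ u) (h : ∀ s, ‖u s‖ = 1) (s : ℝ) : ⟪u s, deriv u s⟫ = 0 := by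
  have key := ((hu s).hasDerivAt.inner ℝ (hu s).hasDerivAt)
  have hc : (fun t => ⟪u t, u t⟫) = fun _ => (1 : ℝ) := by
    ext t; rw [real_inner_self_eq_norm_sq, h]; norm_num
  rw [hc] at key
  have := key.unique (hasDerivAt_const s (1 : ℝ))
  rw [real_inner_comm (u s)] at this
  linarith [real_inner_comm (u s) (deriv u s)]

theorem stmt_11
    (α : ℝ → EuclideanSpace ℝ (Fin 3))
    (hα : ContDiff ℝ (⊤ : ℕ∞) α)
    (hunit : ∀ s, ‖deriv α s‖ = 1)
    (T : ℝ → EuclideanSpace ℝ (Fin 3)) (hT : ∀ s, T s = deriv α s)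
    (κ : ℝ → ℝ) (hκ : ∀ s, κ s = ‖deriv (deriv α) s‖) (hκpos : ∀ s, 0 < κ s)
    (N : ℝ → EuclideanSpace ℝ (Fin 3)) (hN : ∀ s, N s = (κ s)⁻¹ • deriv (deriv α) s)
    (B : ℝ → EuclideanSpace ℝ (Fin 3)) (hB : ∀ s, B s = cross3 (T s) (N s))
    (τ : ℝ → ℝ) (hτ : ∀ s, τ s = ⟪deriv N s, B s⟫)
    (f : ℝ → ℝ) (hf : ∀ s, f s = Real.sqrt (κ s ^ 2 + τ s ^ 2))
    (g : ℝ → ℝ) (hg : ∀ s, g s = κ s ^ 2 / (κ s ^ 2 + τ s ^ 2) * deriv (fun u => τ u / κ u) s)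
    (C : ℝ → EuclideanSpace ℝ (Fin 3))
    (hC : ∀ s, C s = (Real.sqrt (κ s ^ 2 + τ s ^ 2))⁻¹ • ((-κ s) • T s + τ s • B s))
    (W : ℝ → EuclideanSpace ℝ (Fin 3))
    (hW : ∀ s, W s = (Real.sqrt (κ s ^ 2 + τ s ^ 2))⁻¹ • (τ s • T s + κ s • B s))
    (θ : ℝ → ℝ) (hθdiff : Differentiable ℝ θ)
    (hθderiv : ∀ s, deriv θ s = g s)
    (hθκ : ∀ s, κ s = f s * Real.cos (θ s))
    (hθτ : ∀ s, τ s = f s * Real.sin (θ s))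
    (φs φv : ℝ → ℝ → EuclideanSpace ℝ (Fin 3))
    (hφs : ∀ s v, φs s v = deriv (fun u => α u + v • C u) s)
    (hφv : ∀ s v, φv s v = deriv (fun w => α s + w • C s) v) :
    ∀ (s v : ℝ),
      cross3 (φs s v) (φv s v) = (-(Real.sin (θ s) + v * g s)) • N s + (-(v * f s)) • W s ∧
      ‖cross3 (φs s v) (φv s v)‖ ^ 2 = v ^ 2 * f s ^ 2 + (Real.sin (θ s) + v * g s) ^ 2 ∧
      (v ^ 2 * f s ^ 2 + (Real.sin (θ s) + v * g s) ^ 2 ≠ 0 →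
        (‖cross3 (φs s v) (φv s v)‖)⁻¹ • cross3 (φs s v) (φv s v) =
          (Real.sqrt (v ^ 2 * f s ^ 2 + (Real.sin (θ s) + v * g s) ^ 2))⁻¹ •
            ((-(Real.sin (θ s) + v * g s)) • N s + (-(v * f s)) • W s)) := by
  have hα1 : ContDiff ℝ (⊤ : ℕ∞) (deriv α) := (contDiff_infty_iff_deriv.mp hα).2
  have hα2 : ContDiff ℝ (⊤ : ℕ∞) (deriv (deriv α)) := (contDiff_infty_iff_deriv.mp hα1).2
  have hdα : Differentiable ℝ α := hα.differentiable (by simp)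
  have hdα1 : Differentiable ℝ (deriv α) := hα1.differentiable (by simp)
  have hdα2 : Differentiable ℝ (deriv (deriv α)) := hα2.differentiable (by simp)
  obtain rfl : T = deriv α := funext hT
  have hκne (s : ℝ) : κ s ≠ 0 := (hκpos s).ne'
  have hdκ : Differentiable ℝ κ := by
    rw [funext hκ]
    exact hdα2.norm ℝ fun s => by
      rw [← norm_ne_zero_iff, ← hκ]
      exact hκne s
  have hdN : Differentiable ℝ N := by
    rw [funext hN]
    exact (hdκ.inv hκne).smul hdα2
  have hTderiv (s : ℝ) : deriv (deriv α) s = κ s • N s := by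
    rw [hN, smul_inv_smul₀ (hκne s)]
  have hNnorm (s : ℝ) : ‖N s‖ = 1 := by
    rw [hN, norm_smul, ← hκ, norm_inv, Real.norm_of_nonneg (hκpos s).le, inv_mul_cancel₀ (hκne s)]
  have hNN (s : ℝ) : ⟪N s, N s⟫ = 1 := by rw [real_inner_self_eq_norm_sq, hNnorm]; norm_num
  have hTT (s : ℝ) : ⟪deriv α s, deriv α s⟫ = 1 := by
    rw [real_inner_self_eq_norm_sq, hunit]; norm_num
  have hTN (s : ℝ) : ⟪deriv α s, N s⟫ = 0 := by
    rw [hN, real_inner_smul_right, inner_deriv_eq_zero_of_norm_eq_one hdα1 hunit, mul_zero]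
  have hBderiv (s : ℝ) : HasDerivAt B (-τ s • N s) s := by
    rw [funext hB]
    convert (hdα1 s).hasDerivAt.cross3 (hdN s).hasDerivAt using 1
    rw [hTderiv, cross3_smul_left, cross3_self,
      cross3_eq_of_orthonormal (hNN s) (hTN s) (deriv N s), ← hB, ← hτ,
      real_inner_comm, inner_deriv_eq_zero_of_norm_eq_one hdN hNnorm]
    simp
  have hfpos (s : ℝ) : 0 < f s := by
    rw [hf]
    have := hκpos s
    positivity
  have hCθ (s : ℝ) : C s = (-Real.cos (θ s)) • deriv α s + Real.sin (θ s) • B s := by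
    rw [hC, ← hf, hθκ, hθτ, smul_add, smul_smul, smul_smul]
    have := (hfpos s).ne'
    congr 2 <;> field_simp
  have hWθ (s : ℝ) : W s = Real.sin (θ s) • deriv α s + Real.cos (θ s) • B s := by
    rw [hW, ← hf, hθκ, hθτ, smul_add, smul_smul, smul_smul]
    have := (hfpos s).ne'
    congr 2 <;> field_simp
  have hCderiv (s : ℝ) : HasDerivAt C ((-f s) • N s + g s • W s) s := by
    rw [funext hCθ]
    have hθ : HasDerivAt θ (g s) s := hθderiv s ▸ (hθdiff s).hasDerivAt
    refine ((hθ.cos.neg.smul (hdα1 s).hasDerivAt).add (hθ.sin.smul (hBderiv s))).congr_deriv ?_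
    rw [hTderiv, hWθ, hθκ, hθτ]
    have h := Real.sin_sq_add_cos_sq (θ s)
    match_scalars
    · simp only [Pi.neg_apply]
      linear_combination (-f s) * h
    · ring
    · ring
  intro s v
  have hs : φs s v = deriv α s + v • ((-f s) • N s + g s • W s) := by
    rw [hφs]
    exact ((hdα s).hasDerivAt.add ((hCderiv s).const_smul v)).deriv
  have hv : φv s v = C s := by
    rw [hφv]
    simpa using (((hasDerivAt_id v).smul_const (C s)).const_add (α s)).deriv
  have hTB : cross3 (deriv α s) (B s) = -N s := by
    rw [hB, cross3_cross3, hTN, hTT]; simp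
  have hNB : cross3 (N s) (B s) = deriv α s := by
    rw [hB, cross3_cross3, hNN, real_inner_comm, hTN]; simp
  have hBT : cross3 (B s) (deriv α s) = N s := by rw [cross3_anticomm, hTB, neg_neg]
  have hNT : cross3 (N s) (deriv α s) = -B s := by rw [cross3_anticomm, ← hB]
  have hcross : cross3 (φs s v) (φv s v) =
      (-(Real.sin (θ s) + v * g s)) • N s + (-(v * f s)) • W s := by
    rw [hs, hv, hCθ, hWθ]
    simp only [cross3_add_left, cross3_add_right, cross3_smul_left, cross3_smul_right, cross3_self,
      hTB, hNB, hBT, hNT]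
    have h := Real.sin_sq_add_cos_sq (θ s)
    match_scalars
    · ring
    · linear_combination (-v * g s) * h
    · ring
  have hNW : ⟪N s, W s⟫ = 0 := by
    rw [hWθ, inner_add_right, real_inner_smul_right, real_inner_smul_right, real_inner_comm, hTN,
      hB, inner_cross3_self]
    simp
  have hWW : ⟪W s, W s⟫ = 1 := by
    have hTB0 : ⟪deriv α s, B s⟫ = 0 := by rw [hB, inner_self_cross3]
    have hBT0 : ⟪B s, deriv α s⟫ = 0 := by rw [real_inner_comm, hTB0]
    have hBB : ⟪B s, B s⟫ = 1 := by rw [hB, inner_cross3_cross3, hTT, hNN, hTN]; norm_num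
    rw [hWθ]
    simp only [inner_add_left, inner_add_right, real_inner_smul_left, real_inner_smul_right,
      hTB0, hBT0, hBB, hTT]
    linear_combination Real.sin_sq_add_cos_sq (θ s)
  have hnorm : ‖cross3 (φs s v) (φv s v)‖ ^ 2 =
      v ^ 2 * f s ^ 2 + (Real.sin (θ s) + v * g s) ^ 2 := by
    have hWN : ⟪W s, N s⟫ = 0 := by rw [real_inner_comm, hNW]
    rw [hcross, ← real_inner_self_eq_norm_sq]
    simp only [inner_add_left, inner_add_right, real_inner_smul_left, real_inner_smul_right,
      hNW, hWN, hNN, hWW]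
    ring
  refine ⟨hcross, hnorm, fun _ => ?_⟩
  rw [← hnorm, Real.sqrt_sq (norm_nonneg _), ← hcross]
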